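/- (Uniqueness in the stationary characterization.) Let u : Δ(K×L) → ℝ be Lipschitz continuous. Let W¹, W² : Δ(K×L) → ℝ be Lipschitz continuous functions that are K-concave (p ↦ Wⁱ(p⊗Q) concave on Δ(K) for every Q ∈ Δ(L)^K) and L-convex (q ↦ Wⁱ(q⊗P) convex on Δ(L) for every P ∈ Δ(K)^L), and assume that for each i ∈ {1,2}: (1) for every Q ∈ Δ(L)^K, ζ ↦ Wⁱ_K^♯(ζ,Q) := sup_{p∈Δ(K)} Wⁱ(p⊗Q) − ⟨p,ζ⟩ is a viscosity sub-solution on ℝ^K of −w(ζ) + ⟨Dw(ζ),ζ⟩ + u_K(−Dw(ζ),Q) ≥ 0; (2) for every P ∈ Δ(K)^L, η ↦ Wⁱ_L^♭(P,η) := inf_{q∈Δ(L)} Wⁱ(q⊗P) + ⟨q,η⟩ is a viscosity super-solution on ℝ^L of −w(η) + ⟨Dw(η),η⟩ + u_L(P,Dw(η)) ≤ 0. Then W¹ = W² on Δ(K×L). -/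

import Mathlib

/-- `p ⊗ Q ∈ Δ(K×L)`: `(p ⊗ Q)(k,ℓ) = p(k) Q(k)(ℓ)`. -/
def tensKQ {K L : Type*} (p : K → ℝ) (Q : K → L → ℝ) : (K × L) → ℝ :=
  fun kl => p kl.1 * Q kl.1 kl.2

/-- `q ⊗ P ∈ Δ(K×L)`: `(q ⊗ P)(k,ℓ) = q(ℓ) P(ℓ)(k)`. -/
def tensLP {K L : Type*} (q : L → ℝ) (P : L → K → ℝ) : (K × L) → ℝ :=
  fun kl => q kl.2 * P kl.2 kl.1

/-- `W_K^♯(ζ, Q) = sup_{p ∈ Δ(K)} W(p⊗Q) − ⟨p, ζ⟩`. -/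
noncomputable def WsharpK {K L : Type*} [Fintype K]
    (W : ((K × L) → ℝ) → ℝ) (ζ : K → ℝ) (Q : K → L → ℝ) : ℝ :=
  sSup ((fun p => W (tensKQ p Q) - ∑ k, p k * ζ k) '' stdSimplex ℝ K)

/-- `W_L^♭(P, η) = inf_{q ∈ Δ(L)} W(q⊗P) + ⟨q, η⟩`. -/
noncomputable def WflatL {K L : Type*} [Fintype L]
    (W : ((K × L) → ℝ) → ℝ) (P : L → K → ℝ) (η : L → ℝ) : ℝ :=
  sInf ((fun q => W (tensLP q P) + ∑ l, q l * η l) '' stdSimplex ℝ L)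

/-- `W` is a stationary dual solution for the game with non-revealing value `u`:
it is Lipschitz on `Δ(K×L)`, `K`-concave and `L`-convex, for every `Q ∈ Δ(L)^K` the
convex function `ζ ↦ W_K^♯(ζ,Q)` is a viscosity sub-solution on `ℝ^K` of
`−w(ζ) + ⟨Dw(ζ),ζ⟩ + u_K(−Dw(ζ),Q) ≥ 0`, and for every `P ∈ Δ(K)^L` the concave
function `η ↦ W_L^♭(P,η)` is a viscosity super-solution on `ℝ^L` of
`−w(η) + ⟨Dw(η),η⟩ + u_L(P,Dw(η)) ≤ 0`. -/
def IsStationaryDualSolution {K L : Type*} [Fintype K] [Fintype L]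
    [DecidableEq K] [DecidableEq L]
    (u : ((K × L) → ℝ) → ℝ) (W : ((K × L) → ℝ) → ℝ) : Prop :=
  (∃ C : NNReal, LipschitzOnWith C W (stdSimplex ℝ (K × L))) ∧
  (∀ Q : K → L → ℝ, (∀ k, Q k ∈ stdSimplex ℝ L) →
    ConcaveOn ℝ (stdSimplex ℝ K) (fun p => W (tensKQ p Q))) ∧
  (∀ P : L → K → ℝ, (∀ l, P l ∈ stdSimplex ℝ K) →
    ConvexOn ℝ (stdSimplex ℝ L) (fun q => W (tensLP q P))) ∧
  (∀ Q : K → L → ℝ, (∀ k, Q k ∈ stdSimplex ℝ L) →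
    ∀ φ : (K → ℝ) → ℝ, ContDiff ℝ 1 φ →
    ∀ ζ : K → ℝ, IsLocalMax (fun z => WsharpK W z Q - φ z) ζ →
      -(WsharpK W ζ Q) + fderiv ℝ φ ζ ζ
        + u (tensKQ (fun k => -(fderiv ℝ φ ζ (Pi.single k 1))) Q) ≥ 0) ∧
  (∀ P : L → K → ℝ, (∀ l, P l ∈ stdSimplex ℝ K) →
    ∀ φ : (L → ℝ) → ℝ, ContDiff ℝ 1 φ →
    ∀ η : L → ℝ, IsLocalMin (fun z => WflatL W P z - φ z) η →
      -(WflatL W P η) + fderiv ℝ φ η η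
        + u (tensLP (fun l => fderiv ℝ φ η (Pi.single l 1)) P) ≤ 0)

/-! Maximize `W₁ - W₂ + ε ‖·‖²` over `Δ(K×L)` and disintegrate a maximizer as `π = p ⊗ Q`. The
penalty is strictly convex along `x ↦ x ⊗ Q`, and `x ↦ W₂ (x ⊗ Q)`, being concave and Lipschitz, has
a supergradient at `p` even when `p` lies on the boundary of `Δ(K)`. Hence `x ↦ W₁ (x ⊗ Q)` lies
below a strictly concave quadratic touching it at `p`. Conjugation turns this into a convex
quadratic that touches `W₁_K^♯(·, Q)` from above at a point where its gradient is `-p`, and the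
sub-solution inequality for this test function reads `W₁ π ≤ u π`. Exchanging the players gives `u π
≤ W₂ π`, so `W₁ - W₂ ≤ ε` on `Δ(K×L)`; let `ε → 0`. -/

open Set

section Supergradient

variable {E : Type*} {s : Set E} {f g : E → ℝ}

theorem exists_affine_between_of_concaveOn_of_convexOn [TopologicalSpace E] [AddCommGroup E]
    [Module ℝ E] [IsTopologicalAddGroup E] [ContinuousSMul ℝ E] (hs : s.Nonempty)
    (hg : ConcaveOn ℝ s g) (hf : ConvexOn ℝ univ f) (hfc : Continuous f)
    (hgf : ∀ x ∈ s, g x ≤ f x) :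
    ∃ (l : E →L[ℝ] ℝ) (c : ℝ), (∀ x ∈ s, g x ≤ l x + c) ∧ ∀ x, l x + c ≤ f x := by
  have hdisj : Disjoint {z : E × ℝ | z.1 ∈ univ ∧ f z.1 < z.2} {z | z.1 ∈ s ∧ z.2 ≤ g z.1} :=
    disjoint_left.2 fun z hfz hgz => (hfz.2.trans_le hgz.2).not_ge (hgf z.1 hgz.1)
  have hopen : IsOpen {z : E × ℝ | z.1 ∈ univ ∧ f z.1 < z.2} := by
    simpa using isOpen_lt (hfc.comp continuous_fst) continuous_snd
  obtain ⟨F, α, hFf, hFg⟩ :=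
    geometric_hahn_banach_open hf.convex_strict_epigraph hopen hg.convex_hypograph hdisj
  have hF (x : E) (t : ℝ) : F (x, t) = F (x, 0) + t * F (0, 1) := by
    rw [← smul_eq_mul, ← map_smul, ← map_add]
    simp
  have habove {x : E} {t : ℝ} (ht : f x < t) : F (x, 0) + t * F (0, 1) < α :=
    hF x t ▸ hFf (x, t) ⟨mem_univ x, ht⟩
  have hbelow {x : E} (hx : x ∈ s) : α ≤ F (x, 0) + g x * F (0, 1) :=
    hF x (g x) ▸ hFg (x, g x) ⟨hx, le_rfl⟩
  have hslope : F (0, 1) < 0 := by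
    obtain ⟨x, hx⟩ := hs
    nlinarith [habove (lt_add_one (f x)), hbelow hx, hgf x hx]
  refine ⟨(-F (0, 1))⁻¹ • F.comp (.inl ℝ E ℝ), -((-F (0, 1))⁻¹ * α), fun x hx => ?_, fun x => ?_⟩
  all_goals
    simp only [smul_apply, ContinuousLinearMap.comp_apply, ContinuousLinearMap.inl_apply,
      smul_eq_mul, ← sub_eq_add_neg, ← mul_sub]
  · rw [le_inv_mul_iff₀ (neg_pos.2 hslope)]
    linarith [hbelow hx]
  · refine le_of_forall_gt_imp_ge_of_dense fun t ht => ?_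
    rw [inv_mul_le_iff₀ (neg_pos.2 hslope)]
    linarith [habove ht]

theorem exists_supergradient_of_concaveOn_of_lipschitzOnWith [NormedAddCommGroup E]
    [NormedSpace ℝ E] {C : NNReal} {p : E} (hg : ConcaveOn ℝ s g) (hC : LipschitzOnWith C g s)
    (hp : p ∈ s) : ∃ l : E →L[ℝ] ℝ, ∀ x ∈ s, g x ≤ g p + l (x - p) := by
  have hcone : ConvexOn ℝ univ fun x => (C : ℝ) * dist x p + g p :=
    ((convexOn_univ_dist p).smul C.2).add_const (g p)
  have hle (x : E) (hx : x ∈ s) : g x ≤ C * dist x p + g p := by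
    linarith [le_abs_self (g x - g p), Real.dist_eq (g x) (g p) ▸ hC.dist_le_mul x hx p hp]
  obtain ⟨l, c, hgl, hlf⟩ := exists_affine_between_of_concaveOn_of_convexOn ⟨p, hp⟩ hg hcone
    (by fun_prop) hle
  refine ⟨l, fun x hx => ?_⟩
  have hlp : l p + c ≤ g p := by simpa using hlf p
  rw [map_sub]
  linarith [hgl x hx]

end Supergradient

section StrongSupergradient

variable {ι : Type*} [Fintype ι]

theorem dotProduct_self_nonneg (v : ι → ℝ) : 0 ≤ v ⬝ᵥ v := by
  simpa using dotProduct_star_self_nonneg v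

theorem dotProduct_sub_mul_dotProduct_self_le {c : ℝ} (hc : 0 < c) (v w : ι → ℝ) :
    v ⬝ᵥ w - c * (v ⬝ᵥ v) ≤ (4 * c)⁻¹ * (w ⬝ᵥ w) := by
  have hsq := dotProduct_self_nonneg (w - (2 * c) • v)
  simp only [sub_dotProduct, dotProduct_sub, smul_dotProduct, dotProduct_smul, smul_eq_mul,
    dotProduct_comm w v] at hsq
  rw [le_inv_mul_iff₀ (by positivity)]
  linarith

/-- `ζ` is a supergradient of `f` on `s` at `p` with a quadratic margin of modulus `c`: the concave
quadratic with slope `ζ` and curvature `-2c` touching `f` at `p` lies above `f` on `s`. -/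
def IsStrongSupergradientOn (c : ℝ) (f : (ι → ℝ) → ℝ) (s : Set (ι → ℝ)) (p ζ : ι → ℝ) : Prop :=
  ∀ x ∈ s, f x ≤ f p + (x - p) ⬝ᵥ ζ - c * ((x - p) ⬝ᵥ (x - p))

theorem IsStrongSupergradientOn.sub_dotProduct_le {c : ℝ} {f : (ι → ℝ) → ℝ} {s : Set (ι → ℝ)}
    {p ζ x : ι → ℝ} (h : IsStrongSupergradientOn c f s p ζ) (hc : 0 < c) (hx : x ∈ s)
    (z : ι → ℝ) :
    f x - x ⬝ᵥ z ≤ f p - p ⬝ᵥ z + (4 * c)⁻¹ * ((z - ζ) ⬝ᵥ (z - ζ)) := by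
  have hquad := dotProduct_sub_mul_dotProduct_self_le hc (x - p) (ζ - z)
  rw [← neg_sub z ζ, neg_dotProduct_neg, neg_sub, dotProduct_sub, sub_dotProduct x p z] at hquad
  linarith [h x hx]

theorem fderiv_mul_dotProduct_self_sub_dotProduct (a : ℝ) (p ζ v : ι → ℝ) :
    fderiv ℝ (fun z => a * ((z - ζ) ⬝ᵥ (z - ζ)) - p ⬝ᵥ z) ζ v = -(p ⬝ᵥ v) := by
  have hsq : HasFDerivAt (fun z => (z - ζ) ⬝ᵥ (z - ζ)) (0 : (ι → ℝ) →L[ℝ] ℝ) ζ := by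
    have hmin : IsLocalMin (fun z => (z - ζ) ⬝ᵥ (z - ζ)) ζ :=
      .of_forall fun z => by simpa using dotProduct_self_nonneg (z - ζ)
    have hdiff : DifferentiableAt ℝ (fun z => (z - ζ) ⬝ᵥ (z - ζ)) ζ := by
      unfold dotProduct
      fun_prop
    exact hmin.fderiv_eq_zero ▸ hdiff.hasFDerivAt
  have hlin : HasFDerivAt (fun z => p ⬝ᵥ z) (LinearMap.toContinuousLinearMap
      (dotProductBilin ℝ ℝ p)) ζ :=
    (LinearMap.toContinuousLinearMap (dotProductBilin ℝ ℝ p)).hasFDerivAt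
  rw [((hsq.const_mul a).fun_sub hlin).fderiv]
  simp

end StrongSupergradient

section Tensor

variable {K L : Type*} {p : K → ℝ} {Q : K → L → ℝ}

theorem tensKQ_sub (p p' : K → ℝ) (Q : K → L → ℝ) :
    tensKQ (p - p') Q = tensKQ p Q - tensKQ p' Q :=
  funext fun _ => sub_mul _ _ _

variable [Fintype K] [Fintype L]

theorem tensKQ_mem_stdSimplex (hp : p ∈ stdSimplex ℝ K) (hQ : ∀ k, Q k ∈ stdSimplex ℝ L) :
    tensKQ p Q ∈ stdSimplex ℝ (K × L) := by
  refine ⟨fun kl => mul_nonneg (hp.1 _) ((hQ _).1 _), ?_⟩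
  simp only [tensKQ, Fintype.sum_prod_type, ← Finset.mul_sum, (hQ _).2, mul_one, hp.2]

theorem norm_tensKQ_le (p : K → ℝ) (hQ : ∀ k, Q k ∈ stdSimplex ℝ L) : ‖tensKQ p Q‖ ≤ ‖p‖ := by
  refine (pi_norm_le_iff_of_nonneg (norm_nonneg p)).2 fun ⟨k, l⟩ => ?_
  have hQkl : ‖Q k l‖ ≤ 1 := by
    rw [Real.norm_of_nonneg ((hQ k).1 l)]
    exact (mem_Icc_of_mem_stdSimplex (hQ k) l).2
  calc ‖p k * Q k l‖ = ‖p k‖ * ‖Q k l‖ := norm_mul _ _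
    _ ≤ ‖p k‖ := mul_le_of_le_one_right (norm_nonneg _) hQkl
    _ ≤ ‖p‖ := norm_le_pi_norm p k

theorem lipschitzWith_one_tensKQ (hQ : ∀ k, Q k ∈ stdSimplex ℝ L) :
    LipschitzWith 1 fun p => tensKQ p Q :=
  .mk_one fun p p' => by
    rw [dist_eq_norm, dist_eq_norm, ← tensKQ_sub]
    exact norm_tensKQ_le (p - p') hQ

theorem exists_tensKQ_eq {π : K × L → ℝ} (hπ : π ∈ stdSimplex ℝ (K × L)) :
    ∃ p ∈ stdSimplex ℝ K, ∃ Q : K → L → ℝ, (∀ k, Q k ∈ stdSimplex ℝ L) ∧ tensKQ p Q = π := by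
  classical
  have hrow (k : K) : 0 ≤ ∑ l, π (k, l) := Finset.sum_nonneg fun l _ => hπ.1 (k, l)
  -- Rows of mass zero may carry any probability vector; the second marginal is one at hand.
  refine ⟨fun k => ∑ l, π (k, l), ⟨hrow, by rw [← Fintype.sum_prod_type', hπ.2]⟩,
    fun k l => if ∑ l, π (k, l) = 0 then ∑ k, π (k, l) else π (k, l) / ∑ l, π (k, l),
    fun k => ?_, funext fun ⟨k, l⟩ => ?_⟩
  · by_cases h : ∑ l, π (k, l) = 0
    · simp only [h, if_true]
      exact ⟨fun l => Finset.sum_nonneg fun k _ => hπ.1 (k, l),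
        by rw [← Fintype.sum_prod_type_right', hπ.2]⟩
    · simp only [h, if_false]
      exact ⟨fun l => div_nonneg (hπ.1 (k, l)) (hrow k), by rw [← Finset.sum_div, div_self h]⟩
  · by_cases h : ∑ l, π (k, l) = 0
    · have hkl : π (k, l) = 0 :=
        (Finset.sum_eq_zero_iff_of_nonneg fun l _ => hπ.1 (k, l)).1 h l (Finset.mem_univ l)
      simp [tensKQ, h, hkl]
    · simp [tensKQ, h, mul_div_cancel₀]

theorem tensKQ_dotProduct_tensKQ (p p' : K → ℝ) (Q : K → L → ℝ) :
    tensKQ p Q ⬝ᵥ tensKQ p' Q = p ⬝ᵥ fun k => p' k * (Q k ⬝ᵥ Q k) := by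
  simp only [dotProduct, tensKQ, Fintype.sum_prod_type, Finset.mul_sum]
  exact Finset.sum_congr rfl fun k _ => Finset.sum_congr rfl fun l _ => by ring

theorem inv_card_le_dotProduct_self {q : L → ℝ} (hq : q ∈ stdSimplex ℝ L) :
    (Fintype.card L : ℝ)⁻¹ ≤ q ⬝ᵥ q := by
  have hCS : (∑ l, q l) ^ 2 ≤ Fintype.card L * ∑ l, q l ^ 2 := sq_sum_le_card_mul_sum_sq
  rw [hq.2, one_pow] at hCS
  simpa only [dotProduct, sq, mul_one] using
    inv_mul_le_of_le_mul₀ (Nat.cast_nonneg _) (Finset.sum_nonneg fun l _ => sq_nonneg (q l)) hCS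

theorem inv_card_mul_dotProduct_self_le (v : K → ℝ) (hQ : ∀ k, Q k ∈ stdSimplex ℝ L) :
    (Fintype.card L : ℝ)⁻¹ * (v ⬝ᵥ v) ≤ tensKQ v Q ⬝ᵥ tensKQ v Q := by
  rw [tensKQ_dotProduct_tensKQ, dotProduct, dotProduct, Finset.mul_sum]
  refine Finset.sum_le_sum fun k _ => ?_
  nlinarith [mul_le_mul_of_nonneg_left (inv_card_le_dotProduct_self (hQ k)) (mul_self_nonneg (v k))]

theorem dotProduct_self_le_one {q : L → ℝ} (hq : q ∈ stdSimplex ℝ L) : q ⬝ᵥ q ≤ 1 :=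
  calc q ⬝ᵥ q ≤ ∑ l, q l := Finset.sum_le_sum fun l _ =>
        mul_le_of_le_one_right (hq.1 l) (mem_Icc_of_mem_stdSimplex hq l).2
    _ = 1 := hq.2

end Tensor

section Solution

variable {K L : Type*} [Fintype K] [Fintype L]

/-- `K`-concavity of `W` on `Δ(K×L)`. -/
def IsKConcave (W : (K × L → ℝ) → ℝ) : Prop :=
  ∀ Q : K → L → ℝ, (∀ k, Q k ∈ stdSimplex ℝ L) →
    ConcaveOn ℝ (stdSimplex ℝ K) fun p => W (tensKQ p Q)

/-- `L`-convexity of `W` on `Δ(K×L)`. -/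
def IsLConvex (W : (K × L → ℝ) → ℝ) : Prop :=
  ∀ P : L → K → ℝ, (∀ l, P l ∈ stdSimplex ℝ K) →
    ConvexOn ℝ (stdSimplex ℝ L) fun q => W (tensLP q P)

/-- Condition (1): `W_K^♯(·, Q)` is, for every `Q ∈ Δ(L)^K`, a viscosity sub-solution of
`−w(ζ) + ⟨Dw(ζ),ζ⟩ + u_K(−Dw(ζ),Q) ≥ 0`. -/
def IsKSubsolution [DecidableEq K] (u W : (K × L → ℝ) → ℝ) : Prop :=
  ∀ Q : K → L → ℝ, (∀ k, Q k ∈ stdSimplex ℝ L) →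
    ∀ φ : (K → ℝ) → ℝ, ContDiff ℝ 1 φ →
    ∀ ζ : K → ℝ, IsLocalMax (fun z => WsharpK W z Q - φ z) ζ →
      -(WsharpK W ζ Q) + fderiv ℝ φ ζ ζ
        + u (tensKQ (fun k => -(fderiv ℝ φ ζ (Pi.single k 1))) Q) ≥ 0

/-- Condition (2): `W_L^♭(P, ·)` is, for every `P ∈ Δ(K)^L`, a viscosity super-solution of
`−w(η) + ⟨Dw(η),η⟩ + u_L(P,Dw(η)) ≤ 0`. -/
def IsLSupersolution [DecidableEq L] (u W : (K × L → ℝ) → ℝ) : Prop :=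
  ∀ P : L → K → ℝ, (∀ l, P l ∈ stdSimplex ℝ K) →
    ∀ φ : (L → ℝ) → ℝ, ContDiff ℝ 1 φ →
    ∀ η : L → ℝ, IsLocalMin (fun z => WflatL W P z - φ z) η →
      -(WflatL W P η) + fderiv ℝ φ η η
        + u (tensLP (fun l => fderiv ℝ φ η (Pi.single l 1)) P) ≤ 0

theorem IsKSubsolution.le_of_isStrongSupergradientOn [DecidableEq K] {u W : (K × L → ℝ) → ℝ}
    (hW : IsKSubsolution u W) {Q : K → L → ℝ} (hQ : ∀ k, Q k ∈ stdSimplex ℝ L) {p ζ : K → ℝ}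
    (hp : p ∈ stdSimplex ℝ K) {c : ℝ} (hc : 0 < c)
    (hζ : IsStrongSupergradientOn c (fun x => W (tensKQ x Q)) (stdSimplex ℝ K) p ζ) :
    W (tensKQ p Q) ≤ u (tensKQ p Q) := by
  let φ : (K → ℝ) → ℝ := fun z => (4 * c)⁻¹ * ((z - ζ) ⬝ᵥ (z - ζ)) - p ⬝ᵥ z
  have hφ : ContDiff ℝ 1 φ := by
    unfold φ dotProduct
    fun_prop
  have hφ' (v : K → ℝ) : fderiv ℝ φ ζ v = -(p ⬝ᵥ v) :=
    fderiv_mul_dotProduct_self_sub_dotProduct _ p ζ v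
  have hle (z : K → ℝ) : WsharpK W z Q ≤ W (tensKQ p Q) + φ z := by
    refine csSup_le (image_nonempty.2 ⟨p, hp⟩) (forall_mem_image.2 fun x hx => ?_)
    have hx := hζ.sub_dotProduct_le hc hx z
    simp only [dotProduct, φ] at hx ⊢
    linarith
  have heq : WsharpK W ζ Q = W (tensKQ p Q) + φ ζ := by
    have hbdd : BddAbove ((fun x => W (tensKQ x Q) - x ⬝ᵥ ζ) '' stdSimplex ℝ K) :=
      ⟨_, forall_mem_image.2 fun x hx => hζ.sub_dotProduct_le hc hx ζ⟩
    exact (hle ζ).antisymm (le_csSup hbdd ⟨p, hp, by simp [φ, dotProduct, sub_eq_add_neg]⟩)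
  have hmax : IsLocalMax (fun z => WsharpK W z Q - φ z) ζ :=
    .of_forall fun z => by linarith [hle z]
  have hgrad : (fun k => -fderiv ℝ φ ζ (Pi.single k 1)) = p := by
    simp [hφ']
  have hvisc := hW Q hQ φ hφ ζ hmax
  rw [hgrad, hφ', heq] at hvisc
  have hφζ : φ ζ = -(p ⬝ᵥ ζ) := by simp [φ]
  linarith

/-- The difference `W₁ - W₂` with a strictly convex penalty of size `ε`, whose maximizers over
`Δ(K×L)` are the points at which the viscosity inequalities are tested. -/
def penalizedGap (ε : ℝ) (W₁ W₂ : (K × L → ℝ) → ℝ) (π : K × L → ℝ) : ℝ :=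
  W₁ π - W₂ π + ε * (π ⬝ᵥ π)

theorem exists_isStrongSupergradientOn_of_isMaxOn {W₁ W₂ : (K × L → ℝ) → ℝ} {C : NNReal}
    (hC : LipschitzOnWith C W₂ (stdSimplex ℝ (K × L))) (hconc : IsKConcave W₂) {ε : ℝ}
    (hε : 0 ≤ ε) {p : K → ℝ} (hp : p ∈ stdSimplex ℝ K) {Q : K → L → ℝ}
    (hQ : ∀ k, Q k ∈ stdSimplex ℝ L)
    (hmax : IsMaxOn (penalizedGap ε W₁ W₂) (stdSimplex ℝ (K × L)) (tensKQ p Q)) :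
    ∃ ζ, IsStrongSupergradientOn (ε * (Fintype.card L : ℝ)⁻¹) (fun x => W₁ (tensKQ x Q))
      (stdSimplex ℝ K) p ζ := by
  classical
  have hC' : LipschitzOnWith (C * 1) (fun x => W₂ (tensKQ x Q)) (stdSimplex ℝ K) :=
    hC.comp (lipschitzWith_one_tensKQ hQ).lipschitzOnWith fun x hx => tensKQ_mem_stdSimplex hx hQ
  obtain ⟨l, hl⟩ := exists_supergradient_of_concaveOn_of_lipschitzOnWith (hconc Q hQ) hC' hp
  obtain ⟨g, hg⟩ : ∃ g : K → ℝ, ∀ v, l v = v ⬝ᵥ g :=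
    ⟨(dotProductEquiv ℝ K).symm l, fun v => by
      rw [dotProduct_comm, ← dotProductEquiv_apply_apply, LinearEquiv.apply_symm_apply,
        ContinuousLinearMap.coe_coe]⟩
  let penaltyGrad : K → ℝ := (2 : ℝ) • fun k => p k * (Q k ⬝ᵥ Q k)
  refine ⟨g - ε • penaltyGrad, fun x hx => ?_⟩
  have hexpand : tensKQ x Q ⬝ᵥ tensKQ x Q = tensKQ p Q ⬝ᵥ tensKQ p Q + (x - p) ⬝ᵥ penaltyGrad
      + tensKQ (x - p) Q ⬝ᵥ tensKQ (x - p) Q := by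
    simp only [penaltyGrad, dotProduct_smul, ← tensKQ_dotProduct_tensKQ, tensKQ_sub, sub_dotProduct,
      dotProduct_sub, dotProduct_comm (tensKQ x Q) (tensKQ p Q), smul_eq_mul]
    ring
  have hgap : penalizedGap ε W₁ W₂ (tensKQ x Q) ≤ penalizedGap ε W₁ W₂ (tensKQ p Q) :=
    hmax (tensKQ_mem_stdSimplex hx hQ)
  have hsuper := hl x hx
  have hmargin := mul_le_mul_of_nonneg_left (inv_card_mul_dotProduct_self_le (x - p) hQ) hε
  simp only [penalizedGap, hexpand] at hgap
  rw [hg] at hsuper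
  rw [dotProduct_sub, dotProduct_smul, smul_eq_mul]
  linarith

theorem IsKSubsolution.le_of_isMaxOn_penalizedGap [DecidableEq K] {u W₁ W₂ : (K × L → ℝ) → ℝ}
    {C : NNReal} (hsub : IsKSubsolution u W₁)
    (hC : LipschitzOnWith C W₂ (stdSimplex ℝ (K × L))) (hconc : IsKConcave W₂) {ε : ℝ}
    (hε : 0 < ε) {π : K × L → ℝ} (hπ : π ∈ stdSimplex ℝ (K × L))
    (hmax : IsMaxOn (penalizedGap ε W₁ W₂) (stdSimplex ℝ (K × L)) π) : W₁ π ≤ u π := by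
  obtain ⟨p, hp, Q, hQ, rfl⟩ := exists_tensKQ_eq hπ
  obtain ⟨ζ, hζ⟩ := exists_isStrongSupergradientOn_of_isMaxOn hC hconc hε.le hp hQ hmax
  have : Nonempty (K × L) := by
    by_contra! h
    simp [stdSimplex_of_isEmpty_index] at hπ
  have : Nonempty L := this.map Prod.snd
  exact hsub.le_of_isStrongSupergradientOn hQ hp (by positivity) hζ

end Solution

section SwapPlayers

variable {K L : Type*}

/-- The payoff `W` seen from the other side of the zero-sum game: the roles of `K` and `L` are
exchanged and the sign is reversed. -/
def swapPlayers (W : (K × L → ℝ) → ℝ) : (L × K → ℝ) → ℝ :=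
  fun π => -W (π ∘ Prod.swap)

theorem swapPlayers_tensKQ (W : (K × L → ℝ) → ℝ) (q : L → ℝ) (P : L → K → ℝ) :
    swapPlayers W (tensKQ q P) = -W (tensLP q P) :=
  rfl

theorem WflatL_eq_neg_WsharpK_swapPlayers [Fintype L] (W : (K × L → ℝ) → ℝ)
    (P : L → K → ℝ) (η : L → ℝ) :
    WflatL W P η = -WsharpK (swapPlayers W) η P := by
  simp only [WflatL, WsharpK, Real.sInf_def, ← image_neg_eq_neg, image_image, swapPlayers_tensKQ,
    neg_add']

variable [Fintype K] [Fintype L]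

theorem comp_swap_mem_stdSimplex {π : K × L → ℝ} (hπ : π ∈ stdSimplex ℝ (K × L)) :
    π ∘ Prod.swap ∈ stdSimplex ℝ (L × K) :=
  ⟨fun lk => hπ.1 lk.swap, hπ.2 ▸ (Equiv.prodComm L K).sum_comp π⟩

theorem lipschitzOnWith_swapPlayers {W : (K × L → ℝ) → ℝ} {C : NNReal}
    (hC : LipschitzOnWith C W (stdSimplex ℝ (K × L))) :
    LipschitzOnWith C (swapPlayers W) (stdSimplex ℝ (L × K)) := by
  have hswap : LipschitzWith 1 fun π : L × K → ℝ => π ∘ Prod.swap :=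
    .mk_one fun π π' => (dist_pi_le_iff dist_nonneg).2 fun kl => dist_le_pi_dist π π' kl.swap
  exact mul_one C ▸ (hC.comp hswap.lipschitzOnWith fun π hπ => comp_swap_mem_stdSimplex hπ).neg

theorem IsLConvex.isKConcave_swapPlayers {W : (K × L → ℝ) → ℝ} (hW : IsLConvex W) :
    IsKConcave (swapPlayers W) :=
  fun P hP => (hW P hP).neg

theorem IsLSupersolution.isKSubsolution_swapPlayers [DecidableEq L] {u W : (K × L → ℝ) → ℝ}
    (hW : IsLSupersolution u W) : IsKSubsolution (swapPlayers u) (swapPlayers W) := by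
  intro P hP φ hφ η hmax
  have hmin : IsLocalMin (fun z => WflatL W P z - (-φ) z) η := by
    filter_upwards [hmax] with z hz
    simp only [WflatL_eq_neg_WsharpK_swapPlayers, Pi.neg_apply]
    linarith
  have hvisc := hW P hP (-φ) hφ.neg η hmin
  simp only [WflatL_eq_neg_WsharpK_swapPlayers, fderiv_neg, neg_apply] at hvisc
  rw [swapPlayers_tensKQ]
  linarith

theorem penalizedGap_swapPlayers (ε : ℝ) (W₁ W₂ : (K × L → ℝ) → ℝ) (π : L × K → ℝ) :
    penalizedGap ε (swapPlayers W₂) (swapPlayers W₁) π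
      = penalizedGap ε W₁ W₂ (π ∘ Prod.swap) := by
  have hnorm : (π ∘ Prod.swap) ⬝ᵥ (π ∘ Prod.swap) = π ⬝ᵥ π :=
    comp_equiv_dotProduct_comp_equiv π π (Equiv.prodComm K L)
  simp only [penalizedGap, swapPlayers, hnorm]
  ring

theorem IsLSupersolution.le_of_isMaxOn_penalizedGap [DecidableEq L] {u W₁ W₂ : (K × L → ℝ) → ℝ}
    {C : NNReal} (hsup : IsLSupersolution u W₂)
    (hC : LipschitzOnWith C W₁ (stdSimplex ℝ (K × L))) (hconv : IsLConvex W₁) {ε : ℝ}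
    (hε : 0 < ε) {π : K × L → ℝ} (hπ : π ∈ stdSimplex ℝ (K × L))
    (hmax : IsMaxOn (penalizedGap ε W₁ W₂) (stdSimplex ℝ (K × L)) π) : u π ≤ W₂ π := by
  have hmax' : IsMaxOn (penalizedGap ε (swapPlayers W₂) (swapPlayers W₁)) (stdSimplex ℝ (L × K))
      (π ∘ Prod.swap) := isMaxOn_iff.2 fun π' hπ' => by
    simp only [penalizedGap_swapPlayers]
    exact hmax (comp_swap_mem_stdSimplex hπ')
  exact neg_le_neg_iff.1 <| hsup.isKSubsolution_swapPlayers.le_of_isMaxOn_penalizedGap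
    (lipschitzOnWith_swapPlayers hC) hconv.isKConcave_swapPlayers hε
    (comp_swap_mem_stdSimplex hπ) hmax'

end SwapPlayers

section Comparison

variable {K L : Type*} [Fintype K] [Fintype L] [DecidableEq K] [DecidableEq L]
  {u W₁ W₂ : (K × L → ℝ) → ℝ}

theorem stationary_comparison {C₁ C₂ : NNReal}
    (hC₁ : LipschitzOnWith C₁ W₁ (stdSimplex ℝ (K × L))) (hconv₁ : IsLConvex W₁)
    (hsub₁ : IsKSubsolution u W₁)
    (hC₂ : LipschitzOnWith C₂ W₂ (stdSimplex ℝ (K × L))) (hconc₂ : IsKConcave W₂)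
    (hsup₂ : IsLSupersolution u W₂) {π : K × L → ℝ} (hπ : π ∈ stdSimplex ℝ (K × L)) :
    W₁ π ≤ W₂ π := by
  refine le_of_forall_pos_le_add fun ε hε => ?_
  have hcont : ContinuousOn (penalizedGap ε W₁ W₂) (stdSimplex ℝ (K × L)) := by
    refine (hC₁.continuousOn.sub hC₂.continuousOn).add (Continuous.continuousOn ?_)
    unfold dotProduct
    fun_prop
  obtain ⟨μ, hμ, hmax⟩ := (isCompact_stdSimplex ℝ (K × L)).exists_isMaxOn ⟨π, hπ⟩ hcont
  have hsub : W₁ μ ≤ u μ := hsub₁.le_of_isMaxOn_penalizedGap hC₂ hconc₂ hε hμ hmax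
  have hsup : u μ ≤ W₂ μ := hsup₂.le_of_isMaxOn_penalizedGap hC₁ hconv₁ hε hμ hmax
  have hgap : W₁ π - W₂ π ≤ ε :=
    calc W₁ π - W₂ π ≤ penalizedGap ε W₁ W₂ π :=
          le_add_of_nonneg_right (mul_nonneg hε.le (dotProduct_self_nonneg π))
      _ ≤ penalizedGap ε W₁ W₂ μ := hmax hπ
      _ ≤ ε * (μ ⬝ᵥ μ) := add_le_of_nonpos_left (by linarith)
      _ ≤ ε := mul_le_of_le_one_right hε.le (dotProduct_self_le_one hμ)
  linarith

theorem stationary_uniqueness_general (h₁ : IsStationaryDualSolution u W₁)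
    (h₂ : IsStationaryDualSolution u W₂) : EqOn W₁ W₂ (stdSimplex ℝ (K × L)) := by
  obtain ⟨⟨C₁, hC₁⟩, hconc₁, hconv₁, hsub₁, hsup₁⟩ := h₁
  obtain ⟨⟨C₂, hC₂⟩, hconc₂, hconv₂, hsub₂, hsup₂⟩ := h₂
  exact fun π hπ => le_antisymm
    (stationary_comparison hC₁ hconv₁ hsub₁ hC₂ hconc₂ hsup₂ hπ)
    (stationary_comparison hC₂ hconv₂ hsub₂ hC₁ hconc₁ hsup₁ hπ)

end Comparison

/-- Uniqueness in the stationary characterization: two stationary dual solutions for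
the same Lipschitz non-revealing value `u` coincide on `Δ(K×L)`. -/
theorem stationary_uniqueness
    {K L : Type*} [Fintype K] [Fintype L] [Nonempty K] [Nonempty L]
    [DecidableEq K] [DecidableEq L]
    (u : ((K × L) → ℝ) → ℝ)
    (hu : ∃ Cu : NNReal, LipschitzOnWith Cu u (stdSimplex ℝ (K × L)))
    (W₁ W₂ : ((K × L) → ℝ) → ℝ)
    (h₁ : IsStationaryDualSolution u W₁)
    (h₂ : IsStationaryDualSolution u W₂) :
    ∀ π ∈ stdSimplex ℝ (K × L), W₁ π = W₂ π :=
  fun _ hπ => stationary_uniqueness_general h₁ h₂ hπ
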